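/- arXiv:2012.00163 — 4 statements merged into one kernel-verified Lean document; each statement's English description precedes it below -/
import Mathlib

section
/- Let v : ℝ → ℝ be continuous on [−1,1] and let h1, h2 ∈ ℝ. Define u(x) = h1 + (x+1)·h2 + ∫_{−1}^x (x−s)·v(s) ds − (x+1)·∫_{−1}^{1} v(s) ds for x ∈ [−1,1]. Then u is twice continuously differentiable on [−1,1], u''(x) = v(x) for all x ∈ [−1,1], u(−1) = h1, and u'(1) = h2. -/
open Set intervalIntegral

/-!
Differentiating `∫ s in a..x, (x - s) • v s` gives only `∫ s in a..x, v s`, because the kernel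
`x - s` vanishes on the diagonal. The other integral `-(x - a) • ∫ s in a..b, v s` has constant
slope and turns this into `u' x = h₂ - ∫ s in x..b, v s`, from which both `u'' = v` and `u' b = h₂`
can be read off.
-/

theorem contDiffOn_succ_of_hasDerivWithinAt {𝕜 F : Type*} [NontriviallyNormedField 𝕜]
    [NormedAddCommGroup F] [NormedSpace 𝕜 F] {f f' : 𝕜 → F} {s : Set 𝕜} {n : ℕ∞}
    (hs : UniqueDiffOn 𝕜 s) (hf : ∀ x ∈ s, HasDerivWithinAt f (f' x) s x)
    (hf' : ContDiffOn 𝕜 n f' s) : ContDiffOn 𝕜 (n + 1) f s :=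
  (contDiffOn_succ_iff_derivWithin hs).2
    ⟨fun x hx => (hf x hx).differentiableWithinAt, fun hn => absurd hn WithTop.coe_ne_top,
      hf'.congr fun x hx => (hf x hx).derivWithin (hs x hx)⟩

section PrimaryState

variable {E : Type*} [NormedAddCommGroup E] [NormedSpace ℝ E]

/-- The primary state `K(x) B_T⁻¹ h + 𝒯 v` on `[a, b]` for Dirichlet data `h₁` at `a` and Neumann
data `h₂` at `b`. The two integrals are `𝒯 v` for the kernels `G₁ (x, s) = x - s`, integrated over
`[a, x]`, and `G₂ (x, s) = -(x - a)`, integrated over all of `[a, b]`. -/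
noncomputable def primaryState (a b : ℝ) (h₁ h₂ : E) (v : ℝ → E) (x : ℝ) : E :=
  h₁ + (x - a) • h₂ + (∫ s in a..x, (x - s) • v s) - (x - a) • ∫ s in a..b, v s

theorem primaryState_left (a b : ℝ) (h₁ h₂ : E) (v : ℝ → E) : primaryState a b h₁ h₂ v a = h₁ := by
  simp [primaryState]

variable [CompleteSpace E] {a b c x : ℝ} {f v : ℝ → E}

theorem hasDerivWithinAt_integral_right_Icc (hf : ContinuousOn f (Icc a b)) (hc : c ∈ Icc a b)
    (hx : x ∈ Icc a b) : HasDerivWithinAt (fun y => ∫ s in c..y, f s) (f x) (Icc a b) x := by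
  have : Fact (x ∈ Icc a b) := ⟨hx⟩
  exact integral_hasDerivWithinAt_right (hf.mono (uIcc_subset_Icc hc hx)).intervalIntegrable
    (hf.stronglyMeasurableAtFilter_nhdsWithin measurableSet_Icc x) (hf x hx)

theorem hasDerivWithinAt_integral_left_Icc (hf : ContinuousOn f (Icc a b)) (hc : c ∈ Icc a b)
    (hx : x ∈ Icc a b) : HasDerivWithinAt (fun y => ∫ s in y..c, f s) (-f x) (Icc a b) x := by
  simpa only [integral_symm c] using (hasDerivWithinAt_integral_right_Icc hf hc hx).fun_neg

theorem hasDerivWithinAt_integral_sub_smul (hf : ContinuousOn f (Icc a b)) (hc : c ∈ Icc a b)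
    (hx : x ∈ Icc a b) :
    HasDerivWithinAt (fun y => ∫ s in c..y, (y - s) • f s) (∫ s in c..x, f s) (Icc a b) x := by
  have hsf : ContinuousOn (fun s => s • f s) (Icc a b) := continuousOn_id.smul hf
  have split_kernel : ∀ y ∈ Icc a b, ∫ s in c..y, (y - s) • f s =
      y • (∫ s in c..y, f s) - ∫ s in c..y, s • f s := by
    intro y hy
    have hsub := uIcc_subset_Icc hc hy
    have hyf : IntervalIntegrable (fun s => y • f s) MeasureTheory.volume c y :=
      ((hf.mono hsub).const_smul y).intervalIntegrable
    simp only [sub_smul]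
    rw [integral_sub hyf (hsf.mono hsub).intervalIntegrable, intervalIntegral.integral_smul]
  have product_rule := (hasDerivWithinAt_id x (Icc a b)).smul
    (hasDerivWithinAt_integral_right_Icc hf hc hx)
  have hderiv := product_rule.sub (hasDerivWithinAt_integral_right_Icc hsf hc hx)
  refine (hderiv.congr split_kernel (split_kernel x hx)).congr_deriv ?_
  simp only [id_eq, one_smul, add_sub_cancel_left]

theorem hasDerivWithinAt_primaryState (h₁ h₂ : E) (hv : ContinuousOn v (Icc a b))
    (hx : x ∈ Icc a b) :
    HasDerivWithinAt (primaryState a b h₁ h₂ v) (h₂ - ∫ s in x..b, v s) (Icc a b) x := by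
  have ha : a ∈ Icc a b := left_mem_Icc.2 (hx.1.trans hx.2)
  have hb : b ∈ Icc a b := right_mem_Icc.2 (hx.1.trans hx.2)
  have hid : HasDerivWithinAt (fun y => y - a) 1 (Icc a b) x :=
    (hasDerivWithinAt_id x _).sub_const a
  have hsplit : (∫ s in a..x, v s) + ∫ s in x..b, v s = ∫ s in a..b, v s :=
    integral_add_adjacent_intervals (hv.mono (uIcc_subset_Icc ha hx)).intervalIntegrable
      (hv.mono (uIcc_subset_Icc hx hb)).intervalIntegrable
  refine ((((hid.smul_const h₂).const_add h₁).add (hasDerivWithinAt_integral_sub_smul hv ha hx)).sub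
    (hid.smul_const (∫ s in a..b, v s))).congr_deriv ?_
  rw [← hsplit, one_smul, one_smul]
  abel

theorem stmt_3_general (hab : a < b) (hv : ContinuousOn v (Icc a b)) (h₁ h₂ : E) :
    ContDiffOn ℝ 2 (primaryState a b h₁ h₂ v) (Icc a b) ∧
    (∀ x ∈ Icc a b,
      derivWithin (derivWithin (primaryState a b h₁ h₂ v) (Icc a b)) (Icc a b) x = v x) ∧
    primaryState a b h₁ h₂ v a = h₁ ∧
    derivWithin (primaryState a b h₁ h₂ v) (Icc a b) b = h₂ := by
  have hunique : UniqueDiffOn ℝ (Icc a b) := uniqueDiffOn_Icc hab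
  have hb : b ∈ Icc a b := right_mem_Icc.2 hab.le
  have hu' : ∀ x ∈ Icc a b, HasDerivWithinAt (primaryState a b h₁ h₂ v)
      (h₂ - ∫ s in x..b, v s) (Icc a b) x :=
    fun x hx => hasDerivWithinAt_primaryState h₁ h₂ hv hx
  have hu'' : ∀ x ∈ Icc a b,
      HasDerivWithinAt (fun y => h₂ - ∫ s in y..b, v s) (v x) (Icc a b) x := fun x hx => by
    simpa only [neg_neg] using (hasDerivWithinAt_integral_left_Icc hv hb hx).const_sub h₂
  have hderiv : ∀ x ∈ Icc a b,
      derivWithin (primaryState a b h₁ h₂ v) (Icc a b) x = h₂ - ∫ s in x..b, v s :=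
    fun x hx => (hu' x hx).derivWithin (hunique x hx)
  refine ⟨?_, fun x hx => ?_, primaryState_left a b h₁ h₂ v, ?_⟩
  · have hC1 := contDiffOn_succ_of_hasDerivWithinAt (n := 0) hunique hu'' (contDiffOn_zero.2 hv)
    exact contDiffOn_succ_of_hasDerivWithinAt (n := 1) hunique hu' hC1
  · exact ((hu'' x hx).congr hderiv (hderiv x hx)).derivWithin (hunique x hx)
  · rw [hderiv b hb, integral_same, sub_zero]

end PrimaryState

/-- Converse direction of the scalar instance of the paper's Theorem 1 for
Dirichlet–Neumann boundary data: for any continuous fundamental state `v`, the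
primary state `u = K(x)B_T⁻¹h + 𝒯v` is twice continuously differentiable,
satisfies `u'' = v`, and the boundary conditions `u(-1) = h1`, `u'(1) = h2`. -/
theorem stmt_3 (v : ℝ → ℝ) (hv : ContinuousOn v (Icc (-1 : ℝ) 1)) (h1 h2 : ℝ)
    (u : ℝ → ℝ)
    (hu : ∀ x : ℝ, u x = h1 + (x + 1) * h2 + (∫ s in (-1 : ℝ)..x, (x - s) * v s) -
      (x + 1) * ∫ s in (-1 : ℝ)..(1 : ℝ), v s) :
    ContDiffOn ℝ 2 u (Icc (-1 : ℝ) 1) ∧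
    (∀ x ∈ Icc (-1 : ℝ) 1,
      derivWithin (derivWithin u (Icc (-1 : ℝ) 1)) (Icc (-1 : ℝ) 1) x = v x) ∧
    u (-1) = h1 ∧
    derivWithin u (Icc (-1 : ℝ) 1) 1 = h2 := by
  obtain rfl : u = primaryState (-1) 1 h1 h2 v :=
    funext fun x => by simp only [hu, primaryState, sub_neg_eq_add, smul_eq_mul]
  exact stmt_3_general (by norm_num) hv h1 h2
end

section
/- Let ν > 0 and let u : [−1,1] × [0,∞) → ℝ be such that the partial derivatives u_t, u_x, u_xx, ∂_t u_x and ∂_t u_xx exist and are continuous, with ∂_t u_x = ∂_x u_t and ∂_t u_xx = ∂_xx u_t. Suppose u satisfies the homogeneous Dirichlet–Neumann boundary conditions u(−1,t) = 0 and u_x(1,t) = 0 for all t ≥ 0. Set v(x,t) = u_xx(x,t). Then u satisfies the diffusion equation u_t(x,t) = ν·u_xx(x,t) for all (x,t) ∈ [−1,1] × [0,∞) if and only if v satisfies the partial integral equation ∫_{−1}^x (x−s)·∂_t v(s,t) ds − (x+1)·∫_{−1}^{1} ∂_t v(s,t) ds = ν·v(x,t) for all (x,t) ∈ [−1,1] ×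 [0,∞). -/
open Set intervalIntegral

/-!
Taylor's formula with integral remainder recovers a function from its second derivative up to
an affine term, and the boundary conditions `w(a) = 0`, `w'(b) = 0` turn that term into
`-(x - a) ∫_a^b w''`; so the 3-PI operator inverts `∂_xx` under these conditions. Boundary data
constant in time make `u_t(·, t)` satisfy them, and `∂_xx u_t = ∂_t v`, so the left-hand side of
the PIE is `u_t`.
-/

theorem eq_zero_of_hasDerivWithinAt_of_forall_eq_const {𝕜 F : Type*} [NontriviallyNormedField 𝕜]
    [NormedAddCommGroup F] [NormedSpace 𝕜 F] {f : 𝕜 → F} {f' c : F} {T : Set 𝕜} {t : 𝕜}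
    (hT : UniqueDiffWithinAt 𝕜 T t) (ht : t ∈ T) (hf : HasDerivWithinAt f f' T t)
    (hc : ∀ τ ∈ T, f τ = c) : f' = 0 :=
  hT.eq_deriv _ hf ((hasDerivWithinAt_const t T c).congr hc (hc t ht))

section DirichletNeumann

open MeasureTheory.MeasureSpace (volume)

variable {E : Type*} [NormedAddCommGroup E] [NormedSpace ℝ E]

/-- The 3-PI operator `𝒯` of the Dirichlet condition at `a` and the Neumann condition at `b`,
which recovers a state from its second derivative. The kernel `x - s` is integrated over `[a, x]`
and the kernel `-(x - a)` over all of `[a, b]`, not just `[x, b]`. -/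
noncomputable def dirichletNeumannPI (a b : ℝ) (f : ℝ → E) (x : ℝ) : E :=
  (∫ s in a..x, (x - s) • f s) - (x - a) • ∫ s in a..b, f s

variable [CompleteSpace E]

theorem integral_eq_sub_of_hasDerivWithinAt_uIcc {f f' : ℝ → E} {a b : ℝ}
    (hf : ∀ x ∈ uIcc a b, HasDerivWithinAt f (f' x) (uIcc a b) x)
    (hf' : IntervalIntegrable f' volume a b) :
    ∫ x in a..b, f' x = f b - f a :=
  integral_eq_sub_of_hasDeriv_right (fun x hx ↦ (hf x hx).continuousWithinAt)
    (fun x hx ↦ ((hf x (mem_Icc_of_Ioo hx)).hasDerivAt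
      (Icc_mem_nhds hx.1 hx.2)).hasDerivWithinAt) hf'

theorem integral_sub_smul_second_deriv {w w' w'' : ℝ → E} {a x : ℝ}
    (hw : ∀ s ∈ uIcc a x, HasDerivWithinAt w (w' s) (uIcc a x) s)
    (hw' : ∀ s ∈ uIcc a x, HasDerivWithinAt w' (w'' s) (uIcc a x) s)
    (hw'' : IntervalIntegrable w'' volume a x) :
    ∫ s in a..x, (x - s) • w'' s = w x - w a - (x - a) • w' a := by
  have w'_integrable : IntervalIntegrable w' volume a x :=
    ContinuousOn.intervalIntegrable fun s hs ↦ (hw' s hs).continuousWithinAt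
  have by_parts : ∫ s in a..x, (x - s) • w'' s =
      (x - x) • w' x - (x - a) • w' a - ∫ s in a..x, (-1 : ℝ) • w' s :=
    integral_smul_deriv_eq_deriv_smul_of_hasDerivWithinAt
      (fun s _ ↦ (hasDerivWithinAt_id s _).const_sub x) hw' intervalIntegrable_const hw''
  rw [by_parts, integral_smul, integral_eq_sub_of_hasDerivWithinAt_uIcc hw w'_integrable]
  module

theorem dirichletNeumannPI_second_deriv {w w' w'' : ℝ → E} {a b x : ℝ} (hx : x ∈ Icc a b)
    (hw : ∀ s ∈ Icc a b, HasDerivWithinAt w (w' s) (Icc a b) s)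
    (hw' : ∀ s ∈ Icc a b, HasDerivWithinAt w' (w'' s) (Icc a b) s)
    (hw'' : IntervalIntegrable w'' volume a b)
    (dirichlet : w a = 0) (neumann : w' b = 0) :
    dirichletNeumannPI a b w'' x = w x := by
  have hab : uIcc a b = Icc a b := uIcc_of_le (hx.1.trans hx.2)
  have hax : uIcc a x ⊆ Icc a b := uIcc_of_le hx.1 ▸ Icc_subset_Icc_right hx.2
  have taylor : ∫ s in a..x, (x - s) • w'' s = w x - w a - (x - a) • w' a :=
    integral_sub_smul_second_deriv (fun s hs ↦ (hw s (hax hs)).mono hax)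
      (fun s hs ↦ (hw' s (hax hs)).mono hax) (hw''.mono_set (hab.symm ▸ hax))
  have integral_w'' : ∫ s in a..b, w'' s = w' b - w' a :=
    integral_eq_sub_of_hasDerivWithinAt_uIcc (by rwa [hab]) hw''
  rw [dirichletNeumannPI, taylor, integral_w'', dirichlet, neumann]
  module

theorem stmt_5_general {a b : ℝ} (hab : a < b) {T : Set ℝ} (hT : UniqueDiffOn ℝ T)
    (F : ℝ → ℝ → E → E) (α β : E) (u ut ux uxx utx utxx : ℝ → ℝ → E)
    (hut : ∀ x ∈ Icc a b, ∀ t ∈ T, HasDerivWithinAt (fun τ ↦ u x τ) (ut x t) T t)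
    (hux : ∀ x ∈ Icc a b, ∀ t ∈ T, HasDerivWithinAt (fun ξ ↦ u ξ t) (ux x t) (Icc a b) x)
    (huxx : ∀ x ∈ Icc a b, ∀ t ∈ T, HasDerivWithinAt (fun ξ ↦ ux ξ t) (uxx x t) (Icc a b) x)
    (hutx : ∀ x ∈ Icc a b, ∀ t ∈ T, HasDerivWithinAt (fun τ ↦ ux x τ) (utx x t) T t)
    (hutxx : ∀ x ∈ Icc a b, ∀ t ∈ T, HasDerivWithinAt (fun τ ↦ uxx x τ) (utxx x t) T t)
    (hcomm1 : ∀ x ∈ Icc a b, ∀ t ∈ T, HasDerivWithinAt (fun ξ ↦ ut ξ t) (utx x t) (Icc a b) x)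
    (hcomm2 : ∀ x ∈ Icc a b, ∀ t ∈ T, HasDerivWithinAt (fun ξ ↦ utx ξ t) (utxx x t) (Icc a b) x)
    (hint : ∀ t ∈ T, IntervalIntegrable (fun x ↦ utxx x t) volume a b)
    (hbc1 : ∀ t ∈ T, u a t = α) (hbc2 : ∀ t ∈ T, ux b t = β) :
    (∀ x ∈ Icc a b, ∀ t ∈ T, ut x t = F x t (uxx x t)) ↔
    (∀ x ∈ Icc a b, ∀ t ∈ T,
      dirichletNeumannPI a b (fun s ↦ utxx s t) x = F x t (uxx x t)) := by
  refine forall₄_congr fun x hx t ht ↦ ?_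
  have dirichlet : ut a t = 0 := eq_zero_of_hasDerivWithinAt_of_forall_eq_const (hT t ht) ht
    (hut a (left_mem_Icc.2 hab.le) t ht) hbc1
  have neumann : utx b t = 0 := eq_zero_of_hasDerivWithinAt_of_forall_eq_const (hT t ht) ht
    (hutx b (right_mem_Icc.2 hab.le) t ht) hbc2
  have pi_eq_ut : dirichletNeumannPI a b (fun s ↦ utxx s t) x = ut x t :=
    dirichletNeumannPI_second_deriv hx (fun s hs ↦ hcomm1 s hs t ht)
      (fun s hs ↦ hcomm2 s hs t ht) (hint t ht) dirichlet neumann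
  rw [pi_eq_ut]

end DirichletNeumann

/-- Instance of the paper's Theorem 2 for the constant-viscosity diffusion
equation `u_t = ν u_xx` on `[-1,1] × [0,∞)` with homogeneous Dirichlet boundary
condition at `x = -1` and homogeneous Neumann condition at `x = 1`: with the
fundamental state `v = u_xx`, the PDE holds if and only if the PIE
`∫_{-1}^x (x-s) v_t(s,t) ds - (x+1) ∫_{-1}^1 v_t(s,t) ds = ν v(x,t)` holds. -/
theorem stmt_5 (ν : ℝ) (hν : 0 < ν)
    (u ut ux uxx utx utxx : ℝ → ℝ → ℝ)
    -- `ut` is the time derivative of `u` on the domain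
    (hut : ∀ x ∈ Icc (-1 : ℝ) 1, ∀ t ∈ Ici (0 : ℝ),
      HasDerivWithinAt (fun τ => u x τ) (ut x t) (Ici 0) t)
    -- `ux` is the spatial derivative of `u`
    (hux : ∀ x ∈ Icc (-1 : ℝ) 1, ∀ t ∈ Ici (0 : ℝ),
      HasDerivWithinAt (fun ξ => u ξ t) (ux x t) (Icc (-1) 1) x)
    -- `uxx` is the spatial derivative of `ux`
    (huxx : ∀ x ∈ Icc (-1 : ℝ) 1, ∀ t ∈ Ici (0 : ℝ),
      HasDerivWithinAt (fun ξ => ux ξ t) (uxx x t) (Icc (-1) 1) x)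
    -- `utx` is the time derivative of `ux`, i.e. `∂_t u_x` exists
    (hutx : ∀ x ∈ Icc (-1 : ℝ) 1, ∀ t ∈ Ici (0 : ℝ),
      HasDerivWithinAt (fun τ => ux x τ) (utx x t) (Ici 0) t)
    -- `utxx` is the time derivative of `uxx`, i.e. `∂_t u_xx` exists
    (hutxx : ∀ x ∈ Icc (-1 : ℝ) 1, ∀ t ∈ Ici (0 : ℝ),
      HasDerivWithinAt (fun τ => uxx x τ) (utxx x t) (Ici 0) t)
    -- commutation `∂_t u_x = ∂_x u_t`
    (hcomm1 : ∀ x ∈ Icc (-1 : ℝ) 1, ∀ t ∈ Ici (0 : ℝ),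
      HasDerivWithinAt (fun ξ => ut ξ t) (utx x t) (Icc (-1) 1) x)
    -- commutation `∂_t u_xx = ∂_xx u_t`
    (hcomm2 : ∀ x ∈ Icc (-1 : ℝ) 1, ∀ t ∈ Ici (0 : ℝ),
      HasDerivWithinAt (fun ξ => utx ξ t) (utxx x t) (Icc (-1) 1) x)
    -- continuity of all the partial derivatives on the domain
    (hct : ContinuousOn (fun p : ℝ × ℝ => ut p.1 p.2) (Icc (-1 : ℝ) 1 ×ˢ Ici (0 : ℝ)))
    (hcx : ContinuousOn (fun p : ℝ × ℝ => ux p.1 p.2) (Icc (-1 : ℝ) 1 ×ˢ Ici (0 : ℝ)))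
    (hcxx : ContinuousOn (fun p : ℝ × ℝ => uxx p.1 p.2) (Icc (-1 : ℝ) 1 ×ˢ Ici (0 : ℝ)))
    (hctx : ContinuousOn (fun p : ℝ × ℝ => utx p.1 p.2) (Icc (-1 : ℝ) 1 ×ˢ Ici (0 : ℝ)))
    (hctxx : ContinuousOn (fun p : ℝ × ℝ => utxx p.1 p.2) (Icc (-1 : ℝ) 1 ×ˢ Ici (0 : ℝ)))
    -- homogeneous Dirichlet–Neumann boundary conditions
    (hbc1 : ∀ t ∈ Ici (0 : ℝ), u (-1) t = 0)
    (hbc2 : ∀ t ∈ Ici (0 : ℝ), ux 1 t = 0) :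
    (∀ x ∈ Icc (-1 : ℝ) 1, ∀ t ∈ Ici (0 : ℝ), ut x t = ν * uxx x t) ↔
    (∀ x ∈ Icc (-1 : ℝ) 1, ∀ t ∈ Ici (0 : ℝ),
      (∫ s in (-1 : ℝ)..x, (x - s) * utxx s t) -
        (x + 1) * (∫ s in (-1 : ℝ)..(1 : ℝ), utxx s t) = ν * uxx x t) := by
  have hint : ∀ t ∈ Ici (0 : ℝ),
      IntervalIntegrable (fun x ↦ utxx x t) MeasureTheory.volume (-1) 1 := fun t ht ↦
    (hctxx.comp (f := fun x ↦ (x, t)) (by fun_prop)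
      fun x hx ↦ ⟨hx, ht⟩).intervalIntegrable_of_Icc (by norm_num)
  simpa only [dirichletNeumannPI, smul_eq_mul, sub_neg_eq_add] using
    stmt_5_general (by norm_num) (uniqueDiffOn_Ici 0) (fun _ _ w ↦ ν * w) 0 0 u ut ux uxx utx utxx
      hut hux huxx hutx hutxx hcomm1 hcomm2 hint hbc1 hbc2
end

section
/- Let c ∈ ℝ, let h : [0,∞) → ℝ be continuously differentiable, and let u : [−1,1] × [0,∞) → ℝ be such that the partial derivatives u_t, u_x and ∂_t u_x exist and are continuous, with ∂_t u_x = ∂_x u_t. Suppose u satisfies the Dirichlet boundary condition u(−1,t) = h(t) for all t ≥ 0. Set v(x,t) = u_x(x,t). Then u satisfies the transport equation u_t(x,t) + c·u_x(x,t) = 0 for all (x,t) ∈ [−1,1] × [0,∞) if and only if v satisfies the partial integral equation ∫_{−1}^x ∂_t v(s,t) ds = −c·v(x,t) − h'(t) for all (x,t) ∈ [−1,1] × [0,∞). -/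
open Set intervalIntegral

/-!
Integrating `∂ₓ uₜ = ∂ₜ v` in space from the left endpoint recovers `uₜ` up to its value there, and
that value is `h'` because the time derivative at the endpoint only sees the boundary data `h`.
Hence `∫ ∂ₜ v = uₜ - h'`, so both equations prescribe the same value of `uₜ`.
-/

theorem hasDerivWithinAt_eq_of_eqOn {𝕜 E : Type*} [NontriviallyNormedField 𝕜]
    [NormedAddCommGroup E] [NormedSpace 𝕜 E] {f g : 𝕜 → E} {f' g' : E}
    {s : Set 𝕜} {x : 𝕜} (hs : UniqueDiffWithinAt 𝕜 s x) (hx : x ∈ s)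
    (hf : HasDerivWithinAt f f' s x) (hg : HasDerivWithinAt g g' s x) (hfg : EqOn f g s) :
    f' = g' :=
  hs.eq_deriv s hf (hg.congr_of_mem hfg hx)

section Banach

open MeasureTheory

variable {E : Type*} [NormedAddCommGroup E] [NormedSpace ℝ E] [CompleteSpace E] {a b : ℝ}

theorem integral_eq_sub_of_hasDerivWithinAt_Icc {f f' : ℝ → E} (hab : a ≤ b)
    (hf : ∀ x ∈ Icc a b, HasDerivWithinAt f (f' x) (Icc a b) x)
    (hf' : IntervalIntegrable f' volume a b) :
    ∫ x in a..b, f' x = f b - f a :=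
  integral_eq_sub_of_hasDerivAt_of_le hab (HasDerivWithinAt.continuousOn hf)
    (fun x hx => (hf x (Ioo_subset_Icc_self hx)).hasDerivAt (Icc_mem_nhds hx.1 hx.2)) hf'

theorem integral_mixed_deriv_eq_sub_boundary_deriv {T : Set ℝ} {h : ℝ → E} {h' : E}
    {u ut utx : ℝ → ℝ → E} {x t : ℝ} (hx : x ∈ Icc a b) (hT : UniqueDiffWithinAt ℝ T t)
    (ht : t ∈ T) (hh : HasDerivWithinAt h h' T t) (hut : HasDerivWithinAt (u a) (ut a t) T t)
    (hcomm : ∀ ξ ∈ Icc a b, HasDerivWithinAt (fun ξ => ut ξ t) (utx ξ t) (Icc a b) ξ)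
    (hint : IntegrableOn (fun ξ => utx ξ t) (Icc a b)) (hbc : EqOn (u a) h T) :
    ∫ s in a..x, utx s t = ut x t - h' := by
  have boundary_value : ut a t = h' := hasDerivWithinAt_eq_of_eqOn hT ht hut hh hbc
  have hsub : Icc a x ⊆ Icc a b := Icc_subset_Icc_right hx.2
  rw [← boundary_value]
  exact integral_eq_sub_of_hasDerivWithinAt_Icc hx.1
    (fun ξ hξ => (hcomm ξ (hsub hξ)).mono hsub)
    ((intervalIntegrable_iff_integrableOn_Icc_of_le hx.1).2 (hint.mono_set hsub))

theorem stmt_6_general {T : Set ℝ} (hT : UniqueDiffOn ℝ T) (F : ℝ → ℝ → E → E) (h h' : ℝ → E)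
    (hh : ∀ t ∈ T, HasDerivWithinAt h (h' t) T t)
    (u ut ux utx : ℝ → ℝ → E)
    (hut : ∀ x ∈ Icc a b, ∀ t ∈ T, HasDerivWithinAt (fun τ => u x τ) (ut x t) T t)
    (hux : ∀ x ∈ Icc a b, ∀ t ∈ T, HasDerivWithinAt (fun ξ => u ξ t) (ux x t) (Icc a b) x)
    (hutx : ∀ x ∈ Icc a b, ∀ t ∈ T, HasDerivWithinAt (fun τ => ux x τ) (utx x t) T t)
    (hcomm : ∀ x ∈ Icc a b, ∀ t ∈ T, HasDerivWithinAt (fun ξ => ut ξ t) (utx x t) (Icc a b) x)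
    (hint : ∀ t ∈ T, IntegrableOn (fun x => utx x t) (Icc a b))
    (hbc : ∀ t ∈ T, u a t = h t) :
    (∀ x ∈ Icc a b, ∀ t ∈ T, ut x t + F x t (ux x t) = 0) ↔
      ∀ x ∈ Icc a b, ∀ t ∈ T, ∫ s in a..x, utx s t = -F x t (ux x t) - h' t := by
  refine forall₂_congr fun x hx => forall₂_congr fun t ht => ?_
  have ha : a ∈ Icc a b := left_mem_Icc.2 (hx.1.trans hx.2)
  have integral_utx : ∫ s in a..x, utx s t = ut x t - h' t :=
    integral_mixed_deriv_eq_sub_boundary_deriv hx (hT t ht) ht (hh t ht) (hut a ha t ht)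
      (fun ξ hξ => hcomm ξ hξ t ht) (hint t ht) hbc
  rw [integral_utx, sub_left_inj, eq_neg_iff_add_eq_zero]

end Banach

/-- Instance of the paper's Theorem 2 with an inhomogeneous boundary input, for
the transport equation `u_t + c u_x = 0` on `[-1,1] × [0,∞)` with Dirichlet
boundary condition `u(-1,t) = h(t)`: with the fundamental state `v = u_x`, the
PDE holds iff the PIE `∫_{-1}^x v_t(s,t) ds = -c v(x,t) - h'(t)` holds. -/
theorem stmt_6 (c : ℝ) (h h' : ℝ → ℝ)
    -- `h` is continuously differentiable on `[0,∞)` with derivative `h'`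
    (hh : ∀ t ∈ Ici (0 : ℝ), HasDerivWithinAt h (h' t) (Ici 0) t)
    (hh' : ContinuousOn h' (Ici (0 : ℝ)))
    (u ut ux utx : ℝ → ℝ → ℝ)
    -- `ut` is the time derivative of `u` on the domain
    (hut : ∀ x ∈ Icc (-1 : ℝ) 1, ∀ t ∈ Ici (0 : ℝ),
      HasDerivWithinAt (fun τ => u x τ) (ut x t) (Ici 0) t)
    -- `ux` is the spatial derivative of `u`
    (hux : ∀ x ∈ Icc (-1 : ℝ) 1, ∀ t ∈ Ici (0 : ℝ),
      HasDerivWithinAt (fun ξ => u ξ t) (ux x t) (Icc (-1) 1) x)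
    -- `utx` is the time derivative of `ux`, i.e. `∂_t u_x` exists
    (hutx : ∀ x ∈ Icc (-1 : ℝ) 1, ∀ t ∈ Ici (0 : ℝ),
      HasDerivWithinAt (fun τ => ux x τ) (utx x t) (Ici 0) t)
    -- commutation `∂_t u_x = ∂_x u_t`
    (hcomm : ∀ x ∈ Icc (-1 : ℝ) 1, ∀ t ∈ Ici (0 : ℝ),
      HasDerivWithinAt (fun ξ => ut ξ t) (utx x t) (Icc (-1) 1) x)
    -- continuity of the partial derivatives on the domain
    (hct : ContinuousOn (fun p : ℝ × ℝ => ut p.1 p.2) (Icc (-1 : ℝ) 1 ×ˢ Ici (0 : ℝ)))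
    (hcx : ContinuousOn (fun p : ℝ × ℝ => ux p.1 p.2) (Icc (-1 : ℝ) 1 ×ˢ Ici (0 : ℝ)))
    (hctx : ContinuousOn (fun p : ℝ × ℝ => utx p.1 p.2) (Icc (-1 : ℝ) 1 ×ˢ Ici (0 : ℝ)))
    -- Dirichlet boundary condition
    (hbc : ∀ t ∈ Ici (0 : ℝ), u (-1) t = h t) :
    (∀ x ∈ Icc (-1 : ℝ) 1, ∀ t ∈ Ici (0 : ℝ), ut x t + c * ux x t = 0) ↔
    (∀ x ∈ Icc (-1 : ℝ) 1, ∀ t ∈ Ici (0 : ℝ),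
      (∫ s in (-1 : ℝ)..x, utx s t) = -c * ux x t - h' t) := by
  simpa only [neg_mul] using stmt_6_general (uniqueDiffOn_Ici 0) (fun _ _ v => c * v) h h' hh
    u ut ux utx hut hux hutx hcomm (fun t ht => (hctx.uncurry_right t ht).integrableOn_Icc) hbc
end

section
/- Let L > 0 and β > 0 be real numbers satisfying cos(βL)·cosh(βL) = −1 and sin(βL) + sinh(βL) ≠ 0. Define σ = (cos(βL) + cosh(βL))/(sin(βL) + sinh(βL)) and w(x) = cosh(βx) − cos(βx) + σ·(sin(βx) − sinh(βx)). Then w satisfies the fourth-order ODE w''''(x) = β⁴·w(x) for all x ∈ ℝ, together with the cantilever boundary conditions w(0) = 0, w'(0) = 0, w''(L) = 0, and w'''(L) = 0. -/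
open Real

/-!
The span of `cosh (β x)`, `sinh (β x)`, `cos (β x)`, `sin (β x)` is stable under differentiation,
which permutes the four coefficients up to sign and a factor `β`; four derivatives return the
original coefficients. Clamping at `0` leaves the two shapes `cosh - cos` and `sin - sinh`. With
`θ = β L`, the free end imposes two linear equations on their coefficients, whose determinant is
`(cos θ + cosh θ) ^ 2 - (sinh θ ^ 2 - sin θ ^ 2) = 2 (1 + cos θ cosh θ)`. When it vanishes, the `σ`
that cancels the bending moment cancels the shear force too.
-/

/-- The general solution `a cosh (β x) + b sinh (β x) + c cos (β x) + d sin (β x)` of the beam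
equation `w'''' = β⁴ w` (general for `β ≠ 0`), with the hyperbolic coefficients first. -/
noncomputable def beamSolution (β a b c d x : ℝ) : ℝ :=
  a * cosh (β * x) + b * sinh (β * x) + c * cos (β * x) + d * sin (β * x)

section BeamSolution

variable (β a b c d : ℝ)

theorem hasDerivAt_beamSolution (x : ℝ) :
    HasDerivAt (beamSolution β a b c d) (β * beamSolution β b a d (-c) x) x := by
  have hβx : HasDerivAt (fun y : ℝ => β * y) β x := hasDerivAt_const_mul β
  refine ((((hβx.cosh.const_mul a).add (hβx.sinh.const_mul b)).add
    (hβx.cos.const_mul c)).add (hβx.sin.const_mul d)).congr_deriv ?_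
  unfold beamSolution
  ring

theorem deriv_beamSolution :
    deriv (beamSolution β a b c d) = β • beamSolution β b a d (-c) :=
  funext fun x => (hasDerivAt_beamSolution β a b c d x).deriv

theorem deriv_smul_beamSolution (k : ℝ) :
    deriv (k • beamSolution β a b c d) = (k * β) • beamSolution β b a d (-c) := by
  funext x
  rw [deriv_const_smul_field, deriv_beamSolution, ← Pi.smul_apply, smul_smul]

theorem iteratedDeriv_two_beamSolution :
    iteratedDeriv 2 (beamSolution β a b c d) = β ^ 2 • beamSolution β a b (-c) (-d) := by
  rw [iteratedDeriv_succ, iteratedDeriv_one, deriv_beamSolution, deriv_smul_beamSolution, sq]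

theorem iteratedDeriv_three_beamSolution :
    iteratedDeriv 3 (beamSolution β a b c d) = β ^ 3 • beamSolution β b a (-d) c := by
  rw [iteratedDeriv_succ, iteratedDeriv_two_beamSolution, deriv_smul_beamSolution,
    ← pow_succ, neg_neg]

theorem iteratedDeriv_four_beamSolution :
    iteratedDeriv 4 (beamSolution β a b c d) = β ^ 4 • beamSolution β a b c d := by
  rw [iteratedDeriv_succ, iteratedDeriv_three_beamSolution, deriv_smul_beamSolution,
    ← pow_succ, neg_neg]

end BeamSolution

/-- The beam shape `cosh (β x) - cos (β x) + σ (sin (β x) - sinh (β x))`, which is clamped at `0`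
for every ratio `σ` of the two clamped shapes. -/
noncomputable def clampedMode (β σ : ℝ) : ℝ → ℝ :=
  beamSolution β 1 (-σ) (-1) σ

section ClampedMode

variable (β σ : ℝ)

theorem clampedMode_apply (x : ℝ) :
    clampedMode β σ x = cosh (β * x) - cos (β * x) + σ * (sin (β * x) - sinh (β * x)) := by
  unfold clampedMode beamSolution
  ring

theorem clampedMode_zero : clampedMode β σ 0 = 0 := by
  simp [clampedMode_apply]

theorem deriv_clampedMode_zero : deriv (clampedMode β σ) 0 = 0 := by
  simp [clampedMode, deriv_beamSolution, beamSolution]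

theorem iteratedDeriv_two_clampedMode (x : ℝ) :
    iteratedDeriv 2 (clampedMode β σ) x =
      β ^ 2 * (cos (β * x) + cosh (β * x) - σ * (sin (β * x) + sinh (β * x))) := by
  simp only [clampedMode, iteratedDeriv_two_beamSolution, Pi.smul_apply, smul_eq_mul, beamSolution]
  ring

theorem iteratedDeriv_three_clampedMode (x : ℝ) :
    iteratedDeriv 3 (clampedMode β σ) x =
      β ^ 3 * (sinh (β * x) - sin (β * x) - σ * (cos (β * x) + cosh (β * x))) := by
  simp only [clampedMode, iteratedDeriv_three_beamSolution, Pi.smul_apply, smul_eq_mul,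
    beamSolution]
  ring

theorem iteratedDeriv_four_clampedMode (x : ℝ) :
    iteratedDeriv 4 (clampedMode β σ) x = β ^ 4 * clampedMode β σ x :=
  congrFun (iteratedDeriv_four_beamSolution β 1 (-σ) (-1) σ) x

end ClampedMode

theorem sq_cos_add_cosh_sub (θ : ℝ) :
    (cos θ + cosh θ) ^ 2 - (sinh θ ^ 2 - sin θ ^ 2) = 2 * (1 + cos θ * cosh θ) := by
  linear_combination cosh_sq θ + sin_sq_add_cos_sq θ

theorem sinh_sub_sin_eq_of_cos_mul_cosh {θ σ : ℝ} (heig : cos θ * cosh θ = -1)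
    (hden : sin θ + sinh θ ≠ 0) (hσ : σ * (sin θ + sinh θ) = cos θ + cosh θ) :
    sinh θ - sin θ = σ * (cos θ + cosh θ) := by
  have hdet : (cos θ + cosh θ) ^ 2 = sinh θ ^ 2 - sin θ ^ 2 := by
    linear_combination sq_cos_add_cosh_sub θ + 2 * heig
  refine mul_right_cancel₀ hden ?_
  calc (sinh θ - sin θ) * (sin θ + sinh θ)
      = (cos θ + cosh θ) ^ 2 := by rw [hdet]; ring
    _ = σ * (cos θ + cosh θ) * (sin θ + sinh θ) := by rw [mul_right_comm, hσ, sq]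

/-- Free-vibration eigenmode of the cantilevered Euler–Bernoulli beam
(Example 4 of the paper): the mode shape `w` built from a root `β` of the
transcendental equation `cos(βL)·cosh(βL) = -1` solves `w'''' = β⁴ w` with the
cantilever boundary conditions `w(0) = w'(0) = 0`, `w''(L) = w'''(L) = 0`. -/
theorem stmt_7 (L β : ℝ) (hL : 0 < L) (hβ : 0 < β)
    (heig : Real.cos (β * L) * Real.cosh (β * L) = -1)
    (hden : Real.sin (β * L) + Real.sinh (β * L) ≠ 0)
    (σ : ℝ)
    (hσ : σ = (Real.cos (β * L) + Real.cosh (β * L)) /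
      (Real.sin (β * L) + Real.sinh (β * L)))
    (w : ℝ → ℝ)
    (hw : ∀ x : ℝ, w x = Real.cosh (β * x) - Real.cos (β * x) +
      σ * (Real.sin (β * x) - Real.sinh (β * x))) :
    (∀ x : ℝ, iteratedDeriv 4 w x = β ^ 4 * w x) ∧
    w 0 = 0 ∧ deriv w 0 = 0 ∧
    iteratedDeriv 2 w L = 0 ∧ iteratedDeriv 3 w L = 0 := by
  obtain rfl : w = clampedMode β σ := funext fun x => (hw x).trans (clampedMode_apply β σ x).symm
  have hmoment : σ * (sin (β * L) + sinh (β * L)) = cos (β * L) + cosh (β * L) := by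
    rw [hσ, div_mul_cancel₀ _ hden]
  have hshear : sinh (β * L) - sin (β * L) = σ * (cos (β * L) + cosh (β * L)) :=
    sinh_sub_sin_eq_of_cos_mul_cosh heig hden hmoment
  refine ⟨iteratedDeriv_four_clampedMode β σ, clampedMode_zero β σ, deriv_clampedMode_zero β σ,
    ?_, ?_⟩
  · rw [iteratedDeriv_two_clampedMode, hmoment, sub_self, mul_zero]
  · rw [iteratedDeriv_three_clampedMode, hshear, sub_self, mul_zero]
end
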